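/- Let f ∈ ℚ_2[x] be a nonzero polynomial. If σ_{ℚ_2}(f) ≤ 2 then f has at most 15 distinct roots in ℚ_2. -/

import Mathlib

open Polynomial

/-- `f` admits a presentation of additive complexity `s` over `L`. -/
def HasAddComplexityPres {L : Type*} [Field L] (f : L[X]) (s : ℕ) : Prop :=
  ∃ (c d : ℕ → L) (m m' : ℕ → ℕ → ℕ) (Xs : ℕ → L[X]),
    Xs 0 = X ∧
    (∀ j, 1 ≤ j → j ≤ s →
      Xs j = C (c j) * ∏ i ∈ Finset.range j, Xs i ^ m i j
           + C (d j) * ∏ i ∈ Finset.range j, Xs i ^ m' i j) ∧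
    f = C (c (s+1)) * ∏ i ∈ Finset.range (s+1), Xs i ^ m i (s+1)

/-- The additive complexity `σ_L(f)`: the least `s` admitting such a presentation. -/
noncomputable def addComplexity {L : Type*} [Field L] (f : L[X]) : ℕ :=
  sInf {s | HasAddComplexityPres f s}

/-!
A presentation of length two writes `f = e x ^ k₀ P ^ k₁ Q ^ k₂`, where `P` is a binomial in `x` and
`Q` is a binomial in `x` and `P`. Besides `0` there are at most two roots of `P`, because `±1` are
the only roots of unity of `ℚ_[2]`. At a root of `Q` that is neither, `x ^ α = w P(x) ^ β`, that is,
`(x, P(x))` lies on a coset of a subgroup of the torus. Taking a root of order `gcd α β`, which is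
unique up to sign, covers this coset by two translates of a one-parameter subgroup, and along each
of them `y = P(x)` becomes a trinomial equation in the parameter.

A trinomial has at most six nonzero roots in `ℚ_[2]`. Its Newton polygon has at most two edges. The
quotients of roots on the same edge are units, so those roots fall into two cosets of `1 + 4ℤ_[2]`.
A coset contains at most two roots of an edge, because `x ↦ (x ^ m - 1) / (x ^ n - 1)` is injective
on `1 + 4ℤ_[2]` when `m` is more divisible by two than `n`, and comparing the divisibility of the
exponent differences shows that on one of the two edges each coset contains at most one.
-/

section Presentations

variable {L : Type*} [Field L]

theorem hasAddComplexityPres_C (a : L) : HasAddComplexityPres (C a) 0 :=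
  ⟨fun _ => a, 0, 0, 0, fun _ => X, rfl, by omega, by simp⟩

theorem HasAddComplexityPres.X_pow_mul_add_C {f : L[X]} {s : ℕ}
    (h : HasAddComplexityPres f s) (r : ℕ) (b : L) :
    HasAddComplexityPres (X ^ r * f + C b) (s + 1) := by
  obtain ⟨c, d, m, m', Xs, hX, hstep, rfl⟩ := h
  set g := X ^ r * (C (c (s + 1)) * ∏ i ∈ Finset.range (s + 1), Xs i ^ m i (s + 1)) + C b with hg
  refine ⟨Function.update c (s + 2) 1, Function.update d (s + 1) b,
    fun i j => if j ≤ s then m i j else if j = s + 1 then m i j + if i = 0 then r else 0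
      else if i = s + 1 then 1 else 0,
    fun i j => if j ≤ s then m' i j else 0, Function.update Xs (s + 1) g, ?_,
    fun j hj hjs => ?_, ?_⟩
  · simp [hX]
  · have hprod : ∀ e : ℕ → ℕ, ∏ i ∈ Finset.range j, Function.update Xs (s + 1) g i ^ e i =
        ∏ i ∈ Finset.range j, Xs i ^ e i := fun e => Finset.prod_congr rfl fun i hi => by
      rw [Function.update_of_ne (by have := Finset.mem_range.1 hi; omega)]
    simp only [hprod]
    obtain hjs | rfl := Nat.le_succ_iff.1 hjs
    · simp [hjs, hstep j hj hjs, show j ≠ s + 1 by omega, show j ≠ s + 2 by omega]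
    · simp only [hg, Finset.prod_range_succ', hX, Nat.succ_eq_add_one, Function.update_self,
        Function.update_of_ne (show s + 1 ≠ s + 2 by omega), add_le_iff_nonpos_right,
        nonpos_iff_eq_zero, one_ne_zero, ↓reduceIte, Nat.add_eq_zero_iff, and_false, add_zero,
        pow_zero, Finset.prod_const_one, mul_one, add_left_inj]
      ring
  · rw [Finset.prod_range_succ, Finset.prod_eq_one fun i hi => ?_]
    · simp
    · simp [(Finset.mem_range.1 hi).ne]

theorem exists_hasAddComplexityPres (f : L[X]) : ∃ s, HasAddComplexityPres f s := by
  induction f using Polynomial.recOnHorner with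
  | M0 => exact ⟨0, by simpa using hasAddComplexityPres_C (0 : L)⟩
  | MC p a _ _ ih =>
    obtain ⟨s, hs⟩ := ih
    exact ⟨s + 1, by simpa using hs.X_pow_mul_add_C 0 a⟩
  | MX p _ ih =>
    obtain ⟨s, hs⟩ := ih
    exact ⟨s + 1, by simpa [mul_comm] using hs.X_pow_mul_add_C 1 0⟩

theorem HasAddComplexityPres.mono {f : L[X]} {s t : ℕ} (h : HasAddComplexityPres f s)
    (hst : s ≤ t) : HasAddComplexityPres f t := by
  induction t, hst using Nat.le_induction with
  | base => exact h
  | succ t _ ih => simpa using ih.X_pow_mul_add_C 0 0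

theorem addComplexity_le_iff {f : L[X]} {s : ℕ} :
    addComplexity f ≤ s ↔ HasAddComplexityPres f s :=
  ⟨fun h => HasAddComplexityPres.mono (Nat.sInf_mem (s := {s | HasAddComplexityPres f s})
    (exists_hasAddComplexityPres f)) h, fun h => Nat.sInf_le h⟩

theorem HasAddComplexityPres.exists_eq_of_two {f : L[X]} (h : HasAddComplexityPres f 2) :
    ∃ (c d a b e : L) (m n p q p' q' k₀ k₁ k₂ : ℕ) (P Q : L[X]),
      P = C c * X ^ m + C d * X ^ n ∧
      Q = C a * (X ^ p * P ^ q) + C b * (X ^ p' * P ^ q') ∧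
      f = C e * (X ^ k₀ * P ^ k₁ * Q ^ k₂) := by
  obtain ⟨c, d, m, m', Xs, hX, hstep, hf⟩ := h
  have hP := hstep 1 le_rfl one_le_two
  have hQ := hstep 2 one_le_two le_rfl
  simp only [Finset.prod_range_succ, Finset.prod_range_zero, one_mul, hX] at hP hQ hf
  exact ⟨_, _, _, _, _, _, _, _, _, _, _, _, _, _, _, _, hP, hQ, hf⟩

end Presentations

theorem int_induction_odd_two_mul {motive : ℤ → Prop} (zero : motive 0)
    (odd : ∀ k, Odd k → motive k) (two_mul : ∀ k, motive k → motive (2 * k)) (n : ℤ) :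
    motive n := by
  induction hn : n.natAbs using Nat.strong_induction_on generalizing n with
  | _ N ih =>
    obtain ⟨k, rfl | rfl⟩ := n.even_or_odd'
    · obtain rfl | hk := eq_or_ne k 0
      · exact zero
      · exact two_mul k (ih k.natAbs (by omega) k rfl)
    · exact odd _ (odd_two_mul_add_one k)

section Ultrametric

variable {E : Type*} [SeminormedAddCommGroup E] [IsUltrametricDist E] {x y : E}

theorem norm_sub_le_max_of_ultrametric (x y : E) : ‖x - y‖ ≤ max ‖x‖ ‖y‖ := by
  simpa [sub_eq_add_neg] using IsUltrametricDist.norm_add_le_max x (-y)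

theorem norm_add_eq_right_of_norm_lt (h : ‖x‖ < ‖y‖) : ‖x + y‖ = ‖y‖ := by
  rw [IsUltrametricDist.norm_add_eq_max_of_norm_ne_norm h.ne, max_eq_right h.le]

end Ultrametric

section PowSlope

variable {K : Type*} [NontriviallyNormedField K]

/-- The quotient `(x ^ k - 1) / (x - 1)`, extended by its limit `k` at `x = 1` so that its
identities hold without assuming `x ≠ 1`. -/
noncomputable def powSlope (k : ℤ) (x : K) : K :=
  dslope (· ^ k) 1 x

theorem powSlope_mul_sub_one (k : ℤ) (x : K) : powSlope k x * (x - 1) = x ^ k - 1 := by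
  simpa [powSlope, mul_comm] using sub_smul_dslope (fun x : K => x ^ k) 1 x

theorem powSlope_one_right (k : ℤ) : powSlope k (1 : K) = k := by
  simp [powSlope, dslope_same]

theorem powSlope_zero_left (x : K) : powSlope 0 x = 0 := by
  obtain rfl | h1 := eq_or_ne x 1
  · simp [powSlope_one_right]
  · exact mul_right_cancel₀ (sub_ne_zero.2 h1) (by simp [powSlope_mul_sub_one])

theorem powSlope_add_one (k : ℤ) {x : K} (hx : x ≠ 0) :
    powSlope (k + 1) x = powSlope k x * x + 1 := by
  obtain rfl | h1 := eq_or_ne x 1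
  · simp [powSlope_one_right]
  · apply mul_right_cancel₀ (sub_ne_zero.2 h1)
    rw [powSlope_mul_sub_one, zpow_add_one₀ hx]
    linear_combination (-x) * powSlope_mul_sub_one k x

theorem powSlope_sub_one (k : ℤ) {x : K} (hx : x ≠ 0) :
    powSlope (k - 1) x = (powSlope k x - 1) * x⁻¹ := by
  rw [eq_mul_inv_iff_mul_eq₀ hx, eq_sub_iff_add_eq, ← powSlope_add_one _ hx, sub_add_cancel]

theorem powSlope_two_mul (k : ℤ) (x : K) :
    powSlope (2 * k) x = powSlope k x * (x ^ k + 1) := by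
  obtain rfl | h1 := eq_or_ne x 1
  · simp only [powSlope_one_right, Int.cast_mul, Int.cast_ofNat, one_zpow]
    ring
  · apply mul_right_cancel₀ (sub_ne_zero.2 h1)
    rw [powSlope_mul_sub_one, mul_comm 2 k, zpow_mul, zpow_two]
    linear_combination (-(x ^ k) - 1) * powSlope_mul_sub_one k x

theorem powSlope_two_mul_sub (k : ℤ) (x y : K) :
    powSlope (2 * k) x - powSlope (2 * k) y =
      (powSlope k x - powSlope k y) * (x ^ k + 1) + powSlope k y * (x ^ k - y ^ k) := by
  rw [powSlope_two_mul, powSlope_two_mul]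
  ring

variable [IsUltrametricDist K]

theorem norm_powSlope_le_one (k : ℤ) {x : K} (hx : ‖x‖ = 1) : ‖powSlope k x‖ ≤ 1 := by
  have hx0 : x ≠ 0 := norm_ne_zero_iff.1 (by simp [hx])
  induction k using Int.induction_on with
  | zero => simp [powSlope_zero_left]
  | succ k ih =>
    rw [powSlope_add_one _ hx0]
    exact (IsUltrametricDist.norm_add_le_max _ _).trans (by simpa [hx] using ih)
  | pred k ih =>
    rw [powSlope_sub_one _ hx0, norm_mul, norm_inv, hx, inv_one, mul_one]
    exact (norm_sub_le_max_of_ultrametric _ _).trans (by simpa using ih)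

theorem norm_powSlope_sub_powSlope_le (k : ℤ) {x y : K} (hx : ‖x‖ = 1) (hy : ‖y‖ = 1) :
    ‖powSlope k x - powSlope k y‖ ≤ ‖x - y‖ := by
  have hx0 : x ≠ 0 := norm_ne_zero_iff.1 (by simp [hx])
  have hy0 : y ≠ 0 := norm_ne_zero_iff.1 (by simp [hy])
  induction k using Int.induction_on with
  | zero => simp [powSlope_zero_left]
  | succ k ih =>
    have hsplit : powSlope (k + 1) x - powSlope (k + 1) y =
        (powSlope k x - powSlope k y) * x + powSlope k y * (x - y) := by
      rw [powSlope_add_one _ hx0, powSlope_add_one _ hy0]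
      ring
    rw [hsplit]
    refine (IsUltrametricDist.norm_add_le_max _ _).trans (max_le ?_ ?_)
    · rwa [norm_mul, hx, mul_one]
    · rw [norm_mul]
      exact mul_le_of_le_one_left (norm_nonneg _) (norm_powSlope_le_one k hy)
  | pred k ih =>
    have hsplit : powSlope (-k - 1) x - powSlope (-k - 1) y =
        (powSlope (-k) x - powSlope (-k) y - powSlope (-k - 1) y * (x - y)) * x⁻¹ := by
      rw [powSlope_sub_one _ hx0, powSlope_sub_one _ hy0]
      field_simp
      ring
    rw [hsplit, norm_mul, norm_inv, hx, inv_one, mul_one]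
    refine (norm_sub_le_max_of_ultrametric _ _).trans (max_le ih ?_)
    rw [norm_mul]
    exact mul_le_of_le_one_left (norm_nonneg _) (norm_powSlope_le_one _ hy)

theorem norm_zpow_sub_one_le (k : ℤ) {x : K} (hx : ‖x‖ = 1) : ‖x ^ k - 1‖ ≤ ‖x - 1‖ := by
  rw [← powSlope_mul_sub_one, norm_mul]
  exact mul_le_of_le_one_left (norm_nonneg _) (norm_powSlope_le_one k hx)

theorem norm_eq_one_of_norm_sub_one_lt {x : K} (hx : ‖x - 1‖ < 1) : ‖x‖ = 1 := by
  simpa using norm_add_eq_right_of_norm_lt (x := x - 1) (y := 1) (by simpa using hx)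

theorem norm_add_one_eq_norm_two {x : K} (hx : ‖x - 1‖ < ‖(2 : K)‖) : ‖x + 1‖ = ‖(2 : K)‖ := by
  rw [show x + 1 = x - 1 + 2 by ring, norm_add_eq_right_of_norm_lt hx]

variable {x y : K}

theorem norm_intCast_eq_one_of_odd (h2 : ‖(2 : K)‖ < 1) {k : ℤ} (hk : Odd k) : ‖(k : K)‖ = 1 := by
  obtain ⟨r, rfl⟩ := hk
  refine norm_eq_one_of_norm_sub_one_lt ?_
  simpa using mul_lt_one_of_nonneg_of_lt_one_left (norm_nonneg (2 : K)) h2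
    (IsUltrametricDist.norm_intCast_le_one K r)

theorem even_of_norm_intCast_lt_one (h2 : ‖(2 : K)‖ < 1) {k : ℤ} (hk : ‖(k : K)‖ < 1) : Even k := by
  by_contra h
  exact hk.ne (norm_intCast_eq_one_of_odd h2 (Int.not_even_iff_odd.1 h))

theorem norm_zpow_sub_one_lt (h2 : ‖(2 : K)‖ < 1) (hx : ‖x - 1‖ < ‖(2 : K)‖) (k : ℤ) :
    ‖x ^ k - 1‖ < ‖(2 : K)‖ :=
  (norm_zpow_sub_one_le k (norm_eq_one_of_norm_sub_one_lt (hx.trans h2))).trans_lt hx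

theorem norm_powSlope (h2 : ‖(2 : K)‖ < 1) (hx : ‖x - 1‖ < ‖(2 : K)‖) (k : ℤ) :
    ‖powSlope k x‖ = ‖(k : K)‖ := by
  induction k using int_induction_odd_two_mul with
  | zero => simp [powSlope_zero_left]
  | odd k hk =>
    have hle : ‖powSlope k x - k‖ ≤ ‖x - 1‖ := by
      simpa [powSlope_one_right] using norm_powSlope_sub_powSlope_le k
        (norm_eq_one_of_norm_sub_one_lt (hx.trans h2)) (norm_one (α := K))
    have hlt : ‖powSlope k x - k‖ < ‖(k : K)‖ := by
      rw [norm_intCast_eq_one_of_odd h2 hk]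
      exact hle.trans_lt (hx.trans h2)
    simpa using norm_add_eq_right_of_norm_lt hlt
  | two_mul k ih =>
    rw [powSlope_two_mul, norm_mul, ih, norm_add_one_eq_norm_two (norm_zpow_sub_one_lt h2 hx k)]
    simp [mul_comm]

theorem norm_zpow_sub_one (h2 : ‖(2 : K)‖ < 1) (hx : ‖x - 1‖ < ‖(2 : K)‖) (k : ℤ) :
    ‖x ^ k - 1‖ = ‖(k : K)‖ * ‖x - 1‖ := by
  rw [← powSlope_mul_sub_one, norm_mul, norm_powSlope h2 hx]

theorem norm_powSlope_sub_mul_zpow_add_one (h2 : ‖(2 : K)‖ < 1) (hx : ‖x - 1‖ < ‖(2 : K)‖) (k : ℤ)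
    (y : K) :
    ‖(powSlope k x - powSlope k y) * (x ^ k + 1)‖ =
      ‖powSlope k x - powSlope k y‖ * ‖(2 : K)‖ := by
  rw [norm_mul, norm_add_one_eq_norm_two (norm_zpow_sub_one_lt h2 hx k)]

theorem norm_div_sub_one_lt (h2 : ‖(2 : K)‖ < 1) (hx : ‖x - 1‖ < ‖(2 : K)‖)
    (hy : ‖y - 1‖ < ‖(2 : K)‖) : ‖x / y - 1‖ < ‖(2 : K)‖ := by
  have hy1 := norm_eq_one_of_norm_sub_one_lt (hy.trans h2)
  rw [div_sub_one (norm_ne_zero_iff.1 (by simp [hy1])), norm_div, hy1, div_one,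
    ← sub_sub_sub_cancel_right x y 1]
  exact (norm_sub_le_max_of_ultrametric _ _).trans_lt (max_lt hx hy)

theorem norm_zpow_sub_zpow (h2 : ‖(2 : K)‖ < 1) (hx : ‖x - 1‖ < ‖(2 : K)‖)
    (hy : ‖y - 1‖ < ‖(2 : K)‖) (k : ℤ) : ‖x ^ k - y ^ k‖ = ‖(k : K)‖ * ‖x - y‖ := by
  have hy1 := norm_eq_one_of_norm_sub_one_lt (hy.trans h2)
  have hy0 : y ≠ 0 := norm_ne_zero_iff.1 (by simp [hy1])
  have h := norm_zpow_sub_one h2 (norm_div_sub_one_lt h2 hx hy) k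
  rwa [div_zpow, div_sub_one (zpow_ne_zero _ hy0), div_sub_one hy0, norm_div, norm_div, norm_zpow,
    hy1, one_zpow, div_one, div_one] at h

theorem norm_powSlope_mul_zpow_sub_zpow (h2 : ‖(2 : K)‖ < 1) (hx : ‖x - 1‖ < ‖(2 : K)‖)
    (hy : ‖y - 1‖ < ‖(2 : K)‖) (m : ℤ) :
    ‖powSlope m y * (x ^ m - y ^ m)‖ = ‖(m : K)‖ ^ 2 * ‖x - y‖ := by
  rw [norm_mul, norm_powSlope h2 hy, norm_zpow_sub_zpow h2 hx hy]
  ring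

theorem norm_powSlope_two_mul_sub (h2 : ‖(2 : K)‖ < 1) (hx : ‖x - 1‖ < ‖(2 : K)‖)
    (hy : ‖y - 1‖ < ‖(2 : K)‖) (m : ℤ) :
    ‖powSlope (2 * m) x - powSlope (2 * m) y‖ = ‖(m : K)‖ * ‖x - y‖ := by
  have hleft := norm_powSlope_mul_zpow_sub_zpow h2 hx hy
  have hright (m : ℤ) := norm_powSlope_sub_mul_zpow_add_one h2 hx m y
  obtain rfl | hxy := eq_or_ne x y
  · simp
  have hpos : 0 < ‖x - y‖ := norm_pos_iff.2 (sub_ne_zero.2 hxy)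
  induction m using int_induction_odd_two_mul with
  | zero => simp [powSlope_zero_left]
  | odd m hm =>
    have hlt : ‖(powSlope m x - powSlope m y) * (x ^ m + 1)‖ <
        ‖powSlope m y * (x ^ m - y ^ m)‖ := by
      rw [hleft, hright, norm_intCast_eq_one_of_odd h2 hm, one_pow, one_mul]
      exact (mul_le_mul_of_nonneg_right (norm_powSlope_sub_powSlope_le m
        (norm_eq_one_of_norm_sub_one_lt (hx.trans h2))
        (norm_eq_one_of_norm_sub_one_lt (hy.trans h2))) (norm_nonneg _)).trans_lt
          (mul_lt_of_lt_one_right hpos h2)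
    rw [powSlope_two_mul_sub, norm_add_eq_right_of_norm_lt hlt, hleft,
      norm_intCast_eq_one_of_odd h2 hm, one_pow]
  | two_mul m ih =>
    rw [powSlope_two_mul_sub]
    obtain hm | hm := eq_or_ne (m : K) 0
    · rw [norm_eq_zero.1 ((hleft (2 * m)).trans (by simp [hm])), add_zero, hright, ih]
      simp [hm]
    have hlt : ‖powSlope (2 * m) y * (x ^ (2 * m) - y ^ (2 * m))‖ <
        ‖(powSlope (2 * m) x - powSlope (2 * m) y) * (x ^ (2 * m) + 1)‖ := by
      have : 0 < ‖(m : K)‖ := norm_pos_iff.2 hm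
      have : 0 < ‖(2 : K)‖ := (norm_nonneg (x - 1)).trans_lt hx
      have h2m : ‖(2 : K)‖ * ‖(m : K)‖ < 1 := mul_lt_one_of_nonneg_of_lt_one_left
        (norm_nonneg _) h2 (IsUltrametricDist.norm_intCast_le_one K m)
      rw [hleft, hright, ih, Int.cast_mul, norm_mul, Int.cast_ofNat]
      calc (‖(2 : K)‖ * ‖(m : K)‖) ^ 2 * ‖x - y‖
          = ‖(2 : K)‖ * ‖(m : K)‖ * (‖(m : K)‖ * ‖x - y‖ * ‖(2 : K)‖) := by ring
        _ < ‖(m : K)‖ * ‖x - y‖ * ‖(2 : K)‖ := mul_lt_of_lt_one_left (by positivity) h2m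
    rw [add_comm, norm_add_eq_right_of_norm_lt hlt, hright, ih, Int.cast_mul, norm_mul,
      Int.cast_ofNat]
    ring

theorem powSlope_mul_powSlope_ne (h2 : ‖(2 : K)‖ < 1) (hx : ‖x - 1‖ < ‖(2 : K)‖)
    (hy : ‖y - 1‖ < ‖(2 : K)‖) {l n : ℤ} (hl : (l : K) ≠ 0) (hn : Odd n) (hxy : x ≠ y) :
    powSlope (2 * l) x * powSlope n y ≠ powSlope (2 * l) y * powSlope n x := by
  intro heq
  have hdiff : (powSlope (2 * l) x - powSlope (2 * l) y) * powSlope n y =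
      powSlope (2 * l) y * (powSlope n x - powSlope n y) := by
    linear_combination heq
  have hpos : 0 < ‖(l : K)‖ * ‖x - y‖ :=
    mul_pos (norm_pos_iff.2 hl) (norm_pos_iff.2 (sub_ne_zero.2 hxy))
  refine (calc
    ‖(l : K)‖ * ‖x - y‖ = ‖(powSlope (2 * l) x - powSlope (2 * l) y) * powSlope n y‖ := by
      rw [norm_mul, norm_powSlope_two_mul_sub h2 hx hy, norm_powSlope h2 hy,
        norm_intCast_eq_one_of_odd h2 hn, mul_one]
    _ = ‖(2 : K)‖ * ‖(l : K)‖ * ‖powSlope n x - powSlope n y‖ := by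
      rw [hdiff, norm_mul, norm_powSlope h2 hy, Int.cast_mul, norm_mul, Int.cast_ofNat]
    _ ≤ ‖(2 : K)‖ * ‖(l : K)‖ * ‖x - y‖ := by
      gcongr
      exact norm_powSlope_sub_powSlope_le n (norm_eq_one_of_norm_sub_one_lt (hx.trans h2))
        (norm_eq_one_of_norm_sub_one_lt (hy.trans h2))
    _ = ‖(2 : K)‖ * (‖(l : K)‖ * ‖x - y‖) := mul_assoc _ _ _
    _ < ‖(l : K)‖ * ‖x - y‖ := mul_lt_of_lt_one_left hpos h2).false

/- Cross-multiplied injectivity of `x ↦ (x ^ m - 1) / (x ^ n - 1)`. Factors of two common to `m` and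
`n` are removed by squaring `x` and `y`; then `n` is odd and `m` even. -/
theorem sub_one_mul_sub_one_ne (h2 : ‖(2 : K)‖ < 1) (hx : ‖x - 1‖ < ‖(2 : K)‖)
    (hy : ‖y - 1‖ < ‖(2 : K)‖) {m n : ℤ} (hm : (m : K) ≠ 0) (hmn : ‖(m : K)‖ < ‖(n : K)‖)
    (hx1 : x ≠ 1) (hy1 : y ≠ 1) (hxy : x ≠ y) :
    (x ^ m - 1) * (y ^ n - 1) ≠ (y ^ m - 1) * (x ^ n - 1) := by
  have exists_eq_two_mul {m n : ℤ} (h : ‖(m : K)‖ < ‖(n : K)‖) : ∃ l, m = 2 * l :=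
    (even_of_norm_intCast_lt_one h2
      (h.trans_le (IsUltrametricDist.norm_intCast_le_one K n))).exists_two_nsmul
  induction n using int_induction_odd_two_mul generalizing m x y with
  | zero => exact absurd hmn (by simp)
  | odd n hn =>
    obtain ⟨l, rfl⟩ := exists_eq_two_mul hmn
    have hl : (l : K) ≠ 0 := fun h => hm (by simp [h])
    simp only [← powSlope_mul_sub_one]
    intro heq
    refine powSlope_mul_powSlope_ne h2 hx hy hl hn hxy ?_
    refine mul_right_cancel₀ (mul_ne_zero (sub_ne_zero.2 hx1) (sub_ne_zero.2 hy1)) ?_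
    linear_combination heq
  | two_mul n ih =>
    obtain ⟨l, rfl⟩ := exists_eq_two_mul hmn
    have hl : (l : K) ≠ 0 := fun h => hm (by simp [h])
    have two_pos : 0 < ‖((2 : ℤ) : K)‖ := by simpa using (norm_nonneg _).trans_lt hx
    have hln : ‖(l : K)‖ < ‖(n : K)‖ := lt_of_mul_lt_mul_left (by
      simpa only [Int.cast_mul, norm_mul] using hmn) two_pos.le
    have zpow_two_ne {x y : K} (hx : ‖x - 1‖ < ‖(2 : K)‖) (hy : ‖y - 1‖ < ‖(2 : K)‖)
        (hxy : x ≠ y) : x ^ (2 : ℤ) ≠ y ^ (2 : ℤ) := by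
      rw [← sub_ne_zero, ← norm_pos_iff, norm_zpow_sub_zpow h2 hx hy]
      exact mul_pos two_pos (norm_pos_iff.2 (sub_ne_zero.2 hxy))
    have h1 : ‖(1 : K) - 1‖ < ‖(2 : K)‖ := by simpa using two_pos
    simp only [zpow_mul]
    exact ih (norm_zpow_sub_one_lt h2 hx 2) (norm_zpow_sub_one_lt h2 hy 2) hl hln
      (by simpa using zpow_two_ne hx h1 hx1) (by simpa using zpow_two_ne hy h1 hy1)
      (zpow_two_ne hx hy hxy)

end PowSlope

section TrinomialRoots

variable {K : Type*} [Field K] {a b c : K} {i j k : ℤ}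

/-- The nonzero roots of the generalised trinomial `a t ^ i + b t ^ j + c t ^ k`, whose exponents
may be negative. -/
def trinomialRoots (a b c : K) (i j k : ℤ) : Set K :=
  {t | t ≠ 0 ∧ a * t ^ i + b * t ^ j + c * t ^ k = 0}

theorem trinomialRoots_rotate : trinomialRoots b c a j k i = trinomialRoots a b c i j k := by
  ext t
  simp only [trinomialRoots, Set.mem_ofPred_eq, add_rotate (a * t ^ i)]

theorem edge_relation_of_mem_trinomialRoots {t x : K} (ht : t ∈ trinomialRoots a b c i j k)
    (hx : x ∈ trinomialRoots a b c i j k) :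
    b * t ^ j * ((x / t) ^ (j - i) - 1) + c * t ^ k * ((x / t) ^ (k - i) - 1) = 0 := by
  obtain ⟨ht0, ht⟩ := ht
  obtain ⟨hx0, hx⟩ := hx
  rw [div_zpow, div_zpow, zpow_sub₀ ht0, zpow_sub₀ ht0, zpow_sub₀ hx0, zpow_sub₀ hx0]
  field_simp
  linear_combination t ^ i * hx - x ^ i * ht

end TrinomialRoots

section EdgeRoots

variable {K : Type*} [NontriviallyNormedField K]

/-- The nonzero roots of `a t ^ i + b t ^ j + c t ^ k` belonging to the edge of its Newton polygon
that joins the vertices of the exponents `i` and `j`: the first two terms dominate the third. -/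
def edgeRoots (a b c : K) (i j k : ℤ) : Set K :=
  {t ∈ trinomialRoots a b c i j k | ‖a * t ^ i‖ = ‖b * t ^ j‖ ∧ ‖c * t ^ k‖ < ‖b * t ^ j‖}

/-- `S` lies in a single coset of the multiplicative group `1 + 2𝔪`, where `𝔪` is the open unit
ball; for `K = ℚ_[2]` this group is `1 + 4ℤ_[2]`. -/
def IsInDyadicCoset (S : Set K) : Prop :=
  ∀ x ∈ S, ∀ y ∈ S, ‖x / y - 1‖ < ‖(2 : K)‖

variable {a b c : K} {i j k : ℤ}

theorem norm_div_eq_one_of_mem_edgeRoots (ha : a ≠ 0) (hij : i ≠ j) {t x : K}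
    (ht : t ∈ edgeRoots a b c i j k) (hx : x ∈ edgeRoots a b c i j k) : ‖x / t‖ = 1 := by
  have hratio {y : K} (hy : y ∈ edgeRoots a b c i j k) : ‖a‖ = ‖b‖ * ‖y‖ ^ (j - i) := by
    have hy0 := norm_ne_zero_iff.2 hy.1.1
    rw [zpow_sub₀ hy0, mul_div_assoc', eq_div_iff (zpow_ne_zero _ hy0)]
    simpa using hy.2.1
  have hb : ‖b‖ ≠ 0 := left_ne_zero_of_mul (hratio ht ▸ norm_ne_zero_iff.2 ha)
  have hpow : ‖x‖ ^ (j - i) = ‖t‖ ^ (j - i) :=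
    mul_left_cancel₀ hb ((hratio hx).symm.trans (hratio ht))
  rw [zpow_left_inj₀ (norm_nonneg x) (norm_nonneg t) (sub_ne_zero.2 hij.symm)] at hpow
  rw [norm_div, hpow, div_self (norm_ne_zero_iff.2 ht.1.1)]

theorem log_norm_mul_zpow {d t : K} (hd : d ≠ 0) (ht : t ≠ 0) (l : ℤ) :
    Real.log ‖d * t ^ l‖ = Real.log ‖d‖ + l * Real.log ‖t‖ := by
  rw [norm_mul, norm_zpow, Real.log_mul (norm_ne_zero_iff.2 hd)
    (zpow_ne_zero _ (norm_ne_zero_iff.2 ht)), Real.log_zpow]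

/- The affine functions `s ↦ log ‖a‖ + i s` and `s ↦ log ‖b‖ + j s` cross at `log ‖p‖`, and are in
opposite order at `log ‖q‖` and `log ‖r‖`. -/
theorem log_norm_sub_mul_log_norm_sub_neg (ha : a ≠ 0) (hb : b ≠ 0) {p q r : K}
    (hp : p ∈ edgeRoots a b c i j k) (hq : q ∈ edgeRoots b c a j k i)
    (hr : r ∈ edgeRoots c a b k i j) :
    (Real.log ‖q‖ - Real.log ‖p‖) * (Real.log ‖r‖ - Real.log ‖p‖) < 0 := by
  have hp0 := hp.1.1
  have hq0 := hq.1.1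
  have hr0 := hr.1.1
  have hlogp := congrArg Real.log hp.2.1
  have hlogq := Real.log_lt_log (norm_pos_iff.2 (mul_ne_zero ha (zpow_ne_zero i hq0)))
    (hq.2.2.trans_eq hq.2.1.symm)
  have hlogr := Real.log_lt_log (norm_pos_iff.2 (mul_ne_zero hb (zpow_ne_zero j hr0))) hr.2.2
  rw [log_norm_mul_zpow ha ‹_›, log_norm_mul_zpow hb ‹_›] at hlogp hlogq hlogr
  have hq_side : 0 < ((j : ℝ) - i) * (Real.log ‖q‖ - Real.log ‖p‖) := by linarith
  have hr_side : ((j : ℝ) - i) * (Real.log ‖r‖ - Real.log ‖p‖) < 0 := by linarith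
  have hprod := mul_neg_of_pos_of_neg hq_side hr_side
  rw [mul_mul_mul_comm] at hprod
  exact neg_of_mul_neg_right hprod (mul_self_nonneg _)

theorem edgeRoots_eq_empty_of_three (ha : a ≠ 0) (hb : b ≠ 0) (hc : c ≠ 0) :
    edgeRoots a b c i j k = ∅ ∨ edgeRoots b c a j k i = ∅ ∨ edgeRoots c a b k i j = ∅ := by
  by_contra! h
  obtain ⟨⟨p, hp⟩, ⟨q, hq⟩, ⟨r, hr⟩⟩ := h
  have hpq := log_norm_sub_mul_log_norm_sub_neg ha hb hp hq hr
  have hqp := log_norm_sub_mul_log_norm_sub_neg hb hc hq hr hp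
  nlinarith [sq_nonneg (Real.log ‖q‖ - Real.log ‖p‖)]

variable [IsUltrametricDist K] [CharZero K] {S : Set K}

theorem norm_sub_lt_norm_sub_of_ne_mem_edgeRoots (h2 : ‖(2 : K)‖ < 1)
    (hS : S ⊆ edgeRoots a b c i j k) (hcoset : IsInDyadicCoset S) (hij : i ≠ j) {t x : K}
    (ht : t ∈ S) (hx : x ∈ S) (hxt : x ≠ t) :
    ‖((j - i : ℤ) : K)‖ < ‖((k - i : ℤ) : K)‖ := by
  have hclose := hcoset x hx t ht
  have hx1 : x / t ≠ 1 := fun h => hxt ((div_eq_one_iff_eq (hS ht).1.1).1 h)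
  have hbal : ‖b * t ^ j‖ * ‖((j - i : ℤ) : K)‖ = ‖c * t ^ k‖ * ‖((k - i : ℤ) : K)‖ := by
    have h := congrArg norm
      (add_eq_zero_iff_eq_neg.1 (edge_relation_of_mem_trinomialRoots (hS ht).1 (hS hx).1))
    rw [norm_neg, norm_mul, norm_mul (c * _), norm_zpow_sub_one h2 hclose,
      norm_zpow_sub_one h2 hclose, ← mul_assoc, ← mul_assoc] at h
    exact mul_right_cancel₀ (norm_ne_zero_iff.2 (sub_ne_zero.2 hx1)) h
  have hpos : 0 < ‖((j - i : ℤ) : K)‖ :=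
    norm_pos_iff.2 (Int.cast_ne_zero.2 (sub_ne_zero.2 hij.symm))
  by_contra! hle
  exact hbal.not_gt ((mul_le_mul_of_nonneg_left hle (norm_nonneg _)).trans_lt
    (mul_lt_mul_of_pos_right (hS ht).2.2 hpos))

theorem encard_le_two_of_subset_edgeRoots (h2 : ‖(2 : K)‖ < 1) (hS : S ⊆ edgeRoots a b c i j k)
    (hcoset : IsInDyadicCoset S) (hij : i ≠ j) : S.encard ≤ 2 := by
  obtain rfl | ⟨t, ht⟩ := S.eq_empty_or_nonempty
  · simp
  have ht0 : t ≠ 0 := (hS ht).1.1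
  have hle_one : (S \ {t}).encard ≤ 1 := by
    refine Set.encard_le_one_iff.2 fun x y ⟨hx, hxt⟩ ⟨hy, hyt⟩ => ?_
    by_contra hxy
    have hrelx := edge_relation_of_mem_trinomialRoots (hS ht).1 (hS hx).1
    have hrely := edge_relation_of_mem_trinomialRoots (hS ht).1 (hS hy).1
    have hbt : b * t ^ j ≠ 0 := norm_pos_iff.1 ((norm_nonneg _).trans_lt (hS ht).2.2)
    refine sub_one_mul_sub_one_ne h2 (hcoset x hx t ht) (hcoset y hy t ht)
      (Int.cast_ne_zero.2 (sub_ne_zero.2 hij.symm))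
      (norm_sub_lt_norm_sub_of_ne_mem_edgeRoots h2 hS hcoset hij ht hx hxt)
      (fun h => hxt ((div_eq_one_iff_eq ht0).1 h)) (fun h => hyt ((div_eq_one_iff_eq ht0).1 h))
      (fun h => hxy ((div_left_inj' ht0).1 h)) (mul_left_cancel₀ hbt ?_)
    linear_combination ((y / t) ^ (k - i) - 1) * hrelx - ((x / t) ^ (k - i) - 1) * hrely
  rw [← Set.insert_sdiff_self_of_mem ht]
  calc _ ≤ (S \ {t}).encard + 1 := Set.encard_insert_le _ _
    _ ≤ 1 + 1 := by gcongr
    _ = 2 := one_add_one_eq_two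

theorem encard_le_one_of_subset_edgeRoots (h2 : ‖(2 : K)‖ < 1) (hS : S ⊆ edgeRoots a b c i j k)
    (hcoset : IsInDyadicCoset S) (hij : i ≠ j)
    (hle : ‖((k - i : ℤ) : K)‖ ≤ ‖((j - i : ℤ) : K)‖) : S.encard ≤ 1 := by
  refine Set.encard_le_one_iff.2 fun x t hx ht => ?_
  by_contra hxt
  exact hle.not_gt (norm_sub_lt_norm_sub_of_ne_mem_edgeRoots h2 hS hcoset hij ht hx hxt)

end EdgeRoots

section TwoAdic

theorem padic_two_norm_two_lt_one : ‖(2 : ℚ_[2])‖ < 1 := by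
  simpa using Padic.norm_p_lt_one (p := 2)

theorem padic_two_norm_le_norm_two {z : ℚ_[2]} (hz : ‖z‖ < 1) : ‖z‖ ≤ ‖(2 : ℚ_[2])‖ := by
  have h := (Padic.norm_le_pow_iff_norm_lt_pow_add_one z (-1)).2 (by simpa using hz)
  simpa using h.trans_eq (Padic.norm_p_zpow (p := 2) 1).symm

theorem padic_two_norm_sub_one_lt_one {u : ℚ_[2]} (hu : ‖u‖ = 1) : ‖u - 1‖ < 1 := by
  obtain ⟨v, rfl⟩ : ∃ v : ℤ_[2], (v : ℚ_[2]) = u := ⟨⟨u, hu.le⟩, rfl⟩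
  have hrepr := PadicInt.norm_sub_zmodRepr_lt_one v
  have hlt := PadicInt.zmodRepr_lt_p v
  rw [PadicInt.norm_def, PadicInt.coe_sub, PadicInt.coe_natCast] at hrepr
  obtain h | h : v.zmodRepr = 0 ∨ v.zmodRepr = 1 := by omega
  · exact absurd hrepr (by simp [h, hu])
  · simpa [h] using hrepr

theorem padic_two_norm_add_lt {x y : ℚ_[2]} (hxy : ‖x‖ = ‖y‖) (hy : y ≠ 0) :
    ‖x + y‖ < ‖y‖ := by
  have h := padic_two_norm_sub_one_lt_one (u := -(x / y)) (by
    rw [norm_neg, norm_div, hxy, div_self (norm_ne_zero_iff.2 hy)])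
  rwa [← norm_neg, neg_sub, sub_neg_eq_add, ← div_self hy, add_comm, ← add_div, norm_div,
    div_lt_one (norm_pos_iff.2 hy)] at h

theorem padic_two_sub_one_or_add_one {u : ℚ_[2]} (hu : ‖u‖ = 1) :
    ‖u - 1‖ < ‖(2 : ℚ_[2])‖ ∨ ‖u + 1‖ < ‖(2 : ℚ_[2])‖ := by
  rw [or_iff_not_imp_left]
  intro h
  have hnorm : ‖u - 1‖ = ‖(2 : ℚ_[2])‖ :=
    (padic_two_norm_le_norm_two (padic_two_norm_sub_one_lt_one hu)).eq_of_not_lt h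
  simpa [show u - 1 + 2 = u + 1 by ring] using padic_two_norm_add_lt hnorm two_ne_zero

theorem trinomialRoots_subset_edgeRoots {a b c : ℚ_[2]} {i j k : ℤ} (hb : b ≠ 0) :
    trinomialRoots a b c i j k ⊆
      edgeRoots a b c i j k ∪ edgeRoots b c a j k i ∪ edgeRoots c a b k i j := by
  rintro t ht
  have hmem₂ : t ∈ trinomialRoots b c a j k i := by rwa [trinomialRoots_rotate]
  have hmem₃ : t ∈ trinomialRoots c a b k i j := by rwa [trinomialRoots_rotate]
  have hbt : b * t ^ j ≠ 0 := mul_ne_zero hb (zpow_ne_zero _ ht.1)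
  obtain ⟨ht0, hsum⟩ := ht
  have hnorm : ‖c * t ^ k‖ = ‖a * t ^ i + b * t ^ j‖ := by
    rw [← norm_neg, eq_neg_of_add_eq_zero_left hsum]
  obtain h | h | h := lt_trichotomy ‖a * t ^ i‖ ‖b * t ^ j‖
  · rw [norm_add_eq_right_of_norm_lt h] at hnorm
    exact .inl (.inr ⟨hmem₂, hnorm.symm, h.trans_eq hnorm.symm⟩)
  · exact .inl (.inl ⟨⟨ht0, hsum⟩, h, hnorm.trans_lt (padic_two_norm_add_lt h hbt)⟩)
  · rw [add_comm, norm_add_eq_right_of_norm_lt h] at hnorm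
    exact .inr ⟨hmem₃, hnorm, h⟩

theorem exists_isInDyadicCoset_union {S : Set ℚ_[2]} (hS : ∀ x ∈ S, ∀ y ∈ S, ‖x / y‖ = 1) :
    ∃ S₁ S₂, IsInDyadicCoset S₁ ∧ IsInDyadicCoset S₂ ∧ S₁ ∪ S₂ = S := by
  obtain rfl | ⟨t, ht⟩ := S.eq_empty_or_nonempty
  · exact ⟨∅, ∅, by simp [IsInDyadicCoset]⟩
  have ht0 : t ≠ 0 := by
    rintro rfl
    simpa using hS 0 ht 0 ht
  refine ⟨{x ∈ S | ‖x / t - 1‖ < ‖(2 : ℚ_[2])‖}, {x ∈ S | ‖x / t + 1‖ < ‖(2 : ℚ_[2])‖},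
    fun x hx y hy => ?_, fun x hx y hy => ?_, ?_⟩
  · simpa [div_div_div_cancel_right₀ ht0] using
      norm_div_sub_one_lt padic_two_norm_two_lt_one hx.2 hy.2
  · have hneg {z : ℚ_[2]} (hz : ‖z / t + 1‖ < ‖(2 : ℚ_[2])‖) : ‖-(z / t) - 1‖ < ‖(2 : ℚ_[2])‖ := by
      rwa [← neg_add', norm_neg]
    simpa [div_div_div_cancel_right₀ ht0] using
      norm_div_sub_one_lt padic_two_norm_two_lt_one (hneg hx.2) (hneg hy.2)
  · rw [← Set.sep_or]
    exact Set.sep_eq_self_iff_mem_true.2 fun x hx => padic_two_sub_one_or_add_one (hS x hx t ht)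

variable {a b c : ℚ_[2]} {i j k : ℤ}

theorem encard_edgeRoots_le_two_mul (ha : a ≠ 0) (hij : i ≠ j) {n : ℕ∞}
    (hn : ∀ S ⊆ edgeRoots a b c i j k, IsInDyadicCoset S → S.encard ≤ n) :
    (edgeRoots a b c i j k).encard ≤ 2 * n := by
  obtain ⟨S₁, S₂, h₁, h₂, hS⟩ := exists_isInDyadicCoset_union
    fun x hx y hy => norm_div_eq_one_of_mem_edgeRoots ha hij (a := a) (b := b) (c := c) hy hx
  rw [← hS, two_mul]
  exact (Set.encard_union_le _ _).trans (add_le_add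
    (hn S₁ (hS ▸ Set.subset_union_left) h₁) (hn S₂ (hS ▸ Set.subset_union_right) h₂))

theorem encard_edgeRoots_le_four (ha : a ≠ 0) (hij : i ≠ j) :
    (edgeRoots a b c i j k).encard ≤ 4 :=
  encard_edgeRoots_le_two_mul ha hij fun _ hS hcoset =>
    encard_le_two_of_subset_edgeRoots padic_two_norm_two_lt_one hS hcoset hij

theorem encard_edgeRoots_le_two (ha : a ≠ 0) (hij : i ≠ j)
    (hle : ‖((k - i : ℤ) : ℚ_[2])‖ ≤ ‖((j - i : ℤ) : ℚ_[2])‖) :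
    (edgeRoots a b c i j k).encard ≤ 2 :=
  encard_edgeRoots_le_two_mul ha hij fun _ hS hcoset =>
    encard_le_one_of_subset_edgeRoots padic_two_norm_two_lt_one hS hcoset hij hle

theorem encard_edgeRoots_add_encard_edgeRoots_le (ha : a ≠ 0) (hb : b ≠ 0) (hij : i ≠ j)
    (hjk : j ≠ k) :
    (edgeRoots a b c i j k).encard + (edgeRoots b c a j k i).encard ≤ 6 := by
  obtain hle | hlt := le_or_gt ‖((k - i : ℤ) : ℚ_[2])‖ ‖((j - i : ℤ) : ℚ_[2])‖
  · exact add_le_add (encard_edgeRoots_le_two ha hij hle) (encard_edgeRoots_le_four hb hjk)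
  · have hle : ‖((i - j : ℤ) : ℚ_[2])‖ ≤ ‖((k - j : ℤ) : ℚ_[2])‖ := by
      by_contra! h
      rw [← neg_sub j i, Int.cast_neg, norm_neg] at h
      have hmax := norm_add_eq_right_of_norm_lt h
      rw [← Int.cast_add, sub_add_sub_cancel] at hmax
      exact hlt.ne' hmax
    exact add_le_add (encard_edgeRoots_le_four ha hij) (encard_edgeRoots_le_two hb hjk hle)

theorem encard_trinomialRoots_le_six_of_ne (ha : a ≠ 0) (hb : b ≠ 0) (hc : c ≠ 0) (hij : i ≠ j)
    (hjk : j ≠ k) (hki : k ≠ i) : (trinomialRoots a b c i j k).encard ≤ 6 := by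
  have hcover := trinomialRoots_subset_edgeRoots (a := a) (c := c) (i := i) (j := j) (k := k) hb
  refine (Set.encard_le_encard hcover).trans ?_
  obtain h | h | h := edgeRoots_eq_empty_of_three ha hb hc (i := i) (j := j) (k := k)
  · rw [h, Set.empty_union]
    exact (Set.encard_union_le _ _).trans (encard_edgeRoots_add_encard_edgeRoots_le hb hc hjk hki)
  · rw [h, Set.union_empty, Set.union_comm]
    exact (Set.encard_union_le _ _).trans (encard_edgeRoots_add_encard_edgeRoots_le hc ha hki hij)
  · rw [h, Set.union_empty]
    exact (Set.encard_union_le _ _).trans (encard_edgeRoots_add_encard_edgeRoots_le ha hb hij hjk)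

end TwoAdic

section Counting

theorem padic_two_eq_one_or_neg_one_of_zpow_eq_one {r : ℚ_[2]} {N : ℤ} (hN : N ≠ 0)
    (h : r ^ N = 1) : r = 1 ∨ r = -1 := by
  have hr : ‖r‖ = 1 := by
    rw [← zpow_left_inj₀ (norm_nonneg r) zero_le_one hN, ← norm_zpow, h, norm_one, one_zpow]
  have eq_one_of_close {s : ℚ_[2]} (hs : ‖s - 1‖ < ‖(2 : ℚ_[2])‖) (h : s ^ (2 * N) = 1) :
      s = 1 := by
    have hnorm := norm_zpow_sub_one padic_two_norm_two_lt_one hs (2 * N)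
    rw [h, sub_self, norm_zero, zero_eq_mul, norm_eq_zero, Int.cast_eq_zero] at hnorm
    exact sub_eq_zero.1 (norm_eq_zero.1 (hnorm.resolve_left (mul_ne_zero two_ne_zero hN)))
  have hsq : r ^ (2 * N) = 1 := by rw [mul_comm, zpow_mul, h, one_zpow]
  obtain hclose | hclose := padic_two_sub_one_or_add_one hr
  · exact .inl (eq_one_of_close hclose hsq)
  · refine .inr (neg_eq_iff_eq_neg.1 (eq_one_of_close ?_ ?_))
    · rwa [← neg_add', norm_neg]
    · rwa [(even_two_mul N).neg_zpow]

theorem padic_two_eq_or_eq_neg_of_zpow_eq_zpow {x y : ℚ_[2]} {N : ℤ} (hN : N ≠ 0)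
    (h : x ^ N = y ^ N) : x = y ∨ x = -y := by
  obtain rfl | hy := eq_or_ne y 0
  · exact .inl ((zpow_eq_zero_iff hN).1 (by rw [h, zero_zpow N hN]))
  · rw [← div_eq_one_iff_eq (zpow_ne_zero N hy), ← div_zpow] at h
    refine (padic_two_eq_one_or_neg_one_of_zpow_eq_one hN h).imp (div_eq_one_iff_eq hy).1
      fun h => ?_
    rw [(div_eq_iff hy).1 h, neg_one_mul]

theorem encard_zpow_eq_le_two {N : ℤ} (hN : N ≠ 0) (w : ℚ_[2]) :
    {t : ℚ_[2] | t ^ N = w}.encard ≤ 2 := by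
  obtain h | ⟨t, rfl⟩ := {t : ℚ_[2] | t ^ N = w}.eq_empty_or_nonempty
  · simp [h]
  · exact (Set.encard_le_encard fun x hx => padic_two_eq_or_eq_neg_of_zpow_eq_zpow hN hx).trans
      (Set.encard_insert_le {-t} t |>.trans (by simp [one_add_one_eq_two]))

theorem encard_binomial_le_two {a b : ℚ_[2]} {i j : ℤ} (hij : i ≠ j) (hab : a ≠ 0 ∨ b ≠ 0) :
    {t : ℚ_[2] | t ≠ 0 ∧ a * t ^ i + b * t ^ j = 0}.encard ≤ 2 := by
  wlog ha : a ≠ 0 generalizing a b i j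
  · simpa only [add_comm] using this hij.symm hab.symm (hab.resolve_left ha)
  refine le_trans (Set.encard_le_encard ?_) (encard_zpow_eq_le_two (sub_ne_zero.2 hij) (-b / a))
  rintro t ⟨ht0, ht⟩
  rw [Set.mem_ofPred_eq, zpow_sub₀ ht0, div_eq_div_iff (zpow_ne_zero j ht0) ha]
  linear_combination ht

theorem encard_trinomialRoots_le_two {a b c : ℚ_[2]} {i k : ℤ} (hc : c ≠ 0) (hik : i ≠ k) :
    (trinomialRoots a b c i i k).encard ≤ 2 := by
  refine le_trans (Set.encard_le_encard ?_) (encard_binomial_le_two hik (a := a + b) (.inr hc))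
  rintro t ⟨ht0, ht⟩
  exact ⟨ht0, by linear_combination ht⟩

theorem encard_trinomialRoots_le_six {a b c : ℚ_[2]} {i j k : ℤ} (ha : a ≠ 0) (hb : b ≠ 0)
    (hc : c ≠ 0) (hne : ¬(i = j ∧ j = k)) : (trinomialRoots a b c i j k).encard ≤ 6 := by
  have two_le_six : (2 : ℕ∞) ≤ 6 := by norm_num
  obtain rfl | hij := eq_or_ne i j
  · exact (encard_trinomialRoots_le_two hc (by simpa using hne)).trans two_le_six
  obtain rfl | hjk := eq_or_ne j k
  · rw [← trinomialRoots_rotate]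
    exact (encard_trinomialRoots_le_two ha hij.symm).trans two_le_six
  obtain rfl | hki := eq_or_ne k i
  · rw [← trinomialRoots_rotate, ← trinomialRoots_rotate]
    exact (encard_trinomialRoots_le_two hb hij).trans two_le_six
  exact encard_trinomialRoots_le_six_of_ne ha hb hc hij hjk hki

theorem exists_zpow_eq_zpow_eq_of_isCoprime {G : Type*} [CommGroupWithZero G] {r s : G}
    (hr : r ≠ 0) (hs : s ≠ 0) {α β : ℤ} (hαβ : IsCoprime α β) (h : r ^ α = s ^ β) :
    ∃ t ≠ 0, t ^ β = r ∧ t ^ α = s := by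
  obtain ⟨p, q, hpq⟩ := hαβ
  refine ⟨s ^ p * r ^ q, mul_ne_zero (zpow_ne_zero _ hs) (zpow_ne_zero _ hr), ?_, ?_⟩
  · calc (s ^ p * r ^ q) ^ β = (s ^ β) ^ p * r ^ (q * β) := by
          rw [mul_zpow, ← zpow_mul, ← zpow_mul, ← zpow_mul, mul_comm p]
      _ = r ^ (p * α + q * β) := by rw [← h, ← zpow_mul, zpow_add₀ hr, mul_comm α]
      _ = r := by rw [hpq, zpow_one]
  · calc (s ^ p * r ^ q) ^ α = s ^ (p * α) * (r ^ α) ^ q := by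
          rw [mul_zpow, ← zpow_mul, ← zpow_mul, ← zpow_mul, mul_comm q]
      _ = s ^ (p * α + q * β) := by rw [h, ← zpow_mul, zpow_add₀ hs, mul_comm β]
      _ = s := by rw [hpq, zpow_one]

/-- The `x ≠ 0` whose image `(x, c x ^ m + d x ^ n)` on the graph of a binomial lies in the
algebraic torus, on the translate `x ^ α = w y ^ β` of a subgroup. -/
def torusCosetPoints {K : Type*} [Field K] (c d : K) (m n α β : ℤ) (w : K) : Set K :=
  {x | x ≠ 0 ∧ c * x ^ m + d * x ^ n ≠ 0 ∧ x ^ α = w * (c * x ^ m + d * x ^ n) ^ β}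

theorem torusCosetPoints_subset_image_trinomialRoots {K : Type*} [Field K]
    {c d : K} {m n α β : ℤ} {w : K} (hαβ : IsCoprime α β) {z : K}
    (hz : z ∈ torusCosetPoints c d m n α β w) :
    torusCosetPoints c d m n α β w ⊆ (fun t => z * t ^ β) ''
      trinomialRoots (c * z ^ m) (d * z ^ n) (-(c * z ^ m + d * z ^ n)) (β * m) (β * n) α := by
  rintro x ⟨hx0, hy0, hx⟩
  obtain ⟨hz0, hyz0, hz⟩ := hz
  have hw : w ≠ 0 := left_ne_zero_of_mul (hz ▸ zpow_ne_zero α hz0)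
  obtain ⟨t, ht0, hxt, hyt⟩ := exists_zpow_eq_zpow_eq_of_isCoprime (div_ne_zero hx0 hz0)
    (div_ne_zero hy0 hyz0) hαβ (by rw [div_zpow, div_zpow, hx, hz, mul_div_mul_left _ _ hw])
  have hx_eq : x = z * t ^ β := by rw [hxt, mul_div_cancel₀ _ hz0]
  refine ⟨t, ⟨ht0, ?_⟩, hx_eq.symm⟩
  rw [eq_div_iff hyz0, hx_eq, mul_zpow, mul_zpow, ← zpow_mul, ← zpow_mul] at hyt
  linear_combination -hyt

theorem encard_torusCosetPoints_le_six {c d : ℚ_[2]} (hc : c ≠ 0) (hd : d ≠ 0) {m n α β : ℤ}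
    (hmn : m ≠ n) (hαβ : IsCoprime α β) (w : ℚ_[2]) :
    (torusCosetPoints c d m n α β w).encard ≤ 6 := by
  obtain h | ⟨z, hz⟩ := (torusCosetPoints c d m n α β w).eq_empty_or_nonempty
  · simp [h]
  refine (Set.encard_le_encard (torusCosetPoints_subset_image_trinomialRoots hαβ hz)).trans
    ((Set.encard_image_le _ _).trans ?_)
  refine encard_trinomialRoots_le_six (mul_ne_zero hc (zpow_ne_zero _ hz.1))
    (mul_ne_zero hd (zpow_ne_zero _ hz.1)) (neg_ne_zero.2 hz.2.1) fun ⟨hβ, hα⟩ => ?_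
  obtain rfl : β = 0 := by
    by_contra h
    exact hmn (mul_left_cancel₀ h hβ)
  rw [← hα, zero_mul] at hαβ
  exact not_isCoprime_zero_zero hαβ

theorem encard_torusCosetPoints_le_twelve {c d : ℚ_[2]} (hc : c ≠ 0) (hd : d ≠ 0) {m n α β : ℤ}
    (hmn : m ≠ n) (hαβ : α ≠ 0 ∨ β ≠ 0) (w : ℚ_[2]) :
    (torusCosetPoints c d m n α β w).encard ≤ 12 := by
  obtain h | ⟨z, -, hyz0, hz⟩ := (torusCosetPoints c d m n α β w).eq_empty_or_nonempty
  · simp [h]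
  have hgcd : 0 < Int.gcd α β := Int.gcd_pos_iff.2 hαβ
  obtain ⟨α', β', hcop, hα, hβ⟩ := Int.exists_gcd_one hgcd
  rw [← Int.isCoprime_iff_gcd_eq_one] at hcop
  have hpow {x y : ℚ_[2]} (hy : y ≠ 0) (h : x ^ α = w * y ^ β) :
      (x ^ α' / y ^ β') ^ (Int.gcd α β : ℤ) = w := by
    rw [div_zpow, ← zpow_mul, ← zpow_mul, ← hα, ← hβ, h,
      mul_div_cancel_right₀ _ (zpow_ne_zero β hy)]
  set w₀ := z ^ α' / (c * z ^ m + d * z ^ n) ^ β'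
  have hcover : torusCosetPoints c d m n α β w ⊆
      torusCosetPoints c d m n α' β' w₀ ∪ torusCosetPoints c d m n α' β' (-w₀) := by
    rintro x ⟨hx0, hy0, hx⟩
    have hy_pow := zpow_ne_zero β' hy0
    refine (padic_two_eq_or_eq_neg_of_zpow_eq_zpow (Int.natCast_ne_zero.2 hgcd.ne')
      ((hpow hy0 hx).trans (hpow hyz0 hz).symm)).imp (fun h => ?_) fun h => ?_
    · exact ⟨hx0, hy0, (div_eq_iff hy_pow).1 h⟩
    · exact ⟨hx0, hy0, (div_eq_iff hy_pow).1 h⟩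
  calc (torusCosetPoints c d m n α β w).encard
      ≤ (torusCosetPoints c d m n α' β' w₀).encard +
          (torusCosetPoints c d m n α' β' (-w₀)).encard :=
        (Set.encard_le_encard hcover).trans (Set.encard_union_le _ _)
    _ ≤ 6 + 6 := add_le_add (encard_torusCosetPoints_le_six hc hd hmn hcop _)
        (encard_torusCosetPoints_le_six hc hd hmn hcop _)
    _ = 12 := by norm_num

theorem encard_rootSet_sdiff_zero_le_two {a b : ℚ_[2]} {m n : ℕ} {P : ℚ_[2][X]}
    (hP : P = C a * X ^ m + C b * X ^ n) : (P.rootSet ℚ_[2] \ {0}).encard ≤ 2 := by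
  have heval (x : ℚ_[2]) (hx : x ∈ P.rootSet ℚ_[2]) : a * x ^ m + b * x ^ n = 0 := by
    simpa [hP] using (mem_rootSet.1 hx).2
  obtain rfl | hmn := eq_or_ne m n
  · have hsub : P.rootSet ℚ_[2] ⊆ {0} := fun x hx => by
      have hab : a + b ≠ 0 := by
        rintro hab
        exact (mem_rootSet.1 hx).1 (by rw [hP, ← add_mul, ← C_add, hab, C_0, zero_mul])
      exact eq_zero_of_pow_eq_zero
        ((mul_eq_zero.1 ((add_mul a b _).trans (heval x hx))).resolve_left hab)
    simp [Set.sdiff_eq_empty.2 hsub]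
  · obtain rfl | hP0 := eq_or_ne P 0
    · simp
    have hab : a ≠ 0 ∨ b ≠ 0 := by
      by_contra! h
      exact hP0 (by simp [hP, h])
    refine (Set.encard_le_encard ?_).trans (encard_binomial_le_two (Nat.cast_injective.ne hmn) hab)
    rintro x ⟨hx, hx0⟩
    exact ⟨hx0, by simpa using heval x hx⟩

theorem mem_torusCosetPoints_of_mem_rootSet {K : Type*} [Field K] {a b c d : K}
    {m n p q p' q' : ℕ} {P Q : K[X]} (ha : a ≠ 0) (hP : P = C c * X ^ m + C d * X ^ n)
    (hQ : Q = C a * (X ^ p * P ^ q) + C b * (X ^ p' * P ^ q')) {x : K} (hx : x ∈ Q.rootSet K)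
    (hx0 : x ≠ 0) (hPx : P.eval x ≠ 0) :
    x ∈ torusCosetPoints c d m n (p - p') (q' - q) (-b / a) := by
  have hPeval : c * x ^ (m : ℤ) + d * x ^ (n : ℤ) = P.eval x := by simp [hP]
  have hQeval : a * (x ^ p * P.eval x ^ q) + b * (x ^ p' * P.eval x ^ q') = 0 := by
    simpa [hQ] using (mem_rootSet.1 hx).2
  refine ⟨hx0, hPeval ▸ hPx, ?_⟩
  rw [hPeval, zpow_sub₀ hx0, zpow_sub₀ hPx]
  simp only [zpow_natCast]
  field_simp
  linear_combination hQeval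

theorem coeff_ne_zero_and_exponents_ne_of_mem_rootSet {K : Type*} [Field K] {a b : K}
    {p q p' q' : ℕ} {P Q : K[X]}
    (hQ : Q = C a * (X ^ p * P ^ q) + C b * (X ^ p' * P ^ q')) {x : K} (hx : x ∈ Q.rootSet K)
    (hx0 : x ≠ 0) (hPx : P.eval x ≠ 0) : a ≠ 0 ∧ ((p - p' : ℤ) ≠ 0 ∨ (q' - q : ℤ) ≠ 0) := by
  obtain ⟨hQ0, hQx⟩ := mem_rootSet.1 hx
  constructor
  · rintro rfl
    have hb : b = 0 := by simpa [hQ, hx0, hPx] using hQx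
    exact hQ0 (by simp [hQ, hb])
  · by_contra! h
    obtain rfl : p = p' := by omega
    obtain rfl : q' = q := by omega
    rw [← add_mul, ← C_add] at hQ
    have hab : a + b = 0 := by simpa [hQ, hx0, hPx] using hQx
    exact hQ0 (by simp [hQ, hab])

theorem encard_rootSet_sdiff_rootSet_le_twelve {a b c d : ℚ_[2]} {m n p q p' q' : ℕ}
    {P Q : ℚ_[2][X]} (hP : P = C c * X ^ m + C d * X ^ n)
    (hQ : Q = C a * (X ^ p * P ^ q) + C b * (X ^ p' * P ^ q')) :
    (Q.rootSet ℚ_[2] \ ({0} ∪ P.rootSet ℚ_[2])).encard ≤ 12 := by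
  have of_monomial {e : ℚ_[2]} {M : ℕ} (hP : P = C e * X ^ M) :
      (Q.rootSet ℚ_[2] \ ({0} ∪ P.rootSet ℚ_[2])).encard ≤ 12 := by
    have hQ' : Q = C (a * e ^ q) * X ^ (p + M * q) + C (b * e ^ q') * X ^ (p' + M * q') := by
      simp only [hQ, hP, mul_pow, C_mul, C_pow, pow_add, pow_mul]
      ring
    exact (Set.encard_le_encard (Set.sdiff_subset_sdiff_right Set.subset_union_left)).trans
      ((encard_rootSet_sdiff_zero_le_two hQ').trans (by norm_num))
  obtain rfl | hc := eq_or_ne c 0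
  · exact of_monomial (e := d) (M := n) (by simpa using hP)
  obtain rfl | hd := eq_or_ne d 0
  · exact of_monomial (e := c) (M := m) (by simpa using hP)
  obtain rfl | hmn := eq_or_ne m n
  · exact of_monomial (e := c + d) (M := m) (by rw [hP, C_add, add_mul])
  have hP0 : P ≠ 0 := fun h => hc (by simpa [hP, coeff_X_pow, hmn] using congrArg (coeff · m) h)
  have ne_zero_of_mem {x : ℚ_[2]} (hx : x ∈ Q.rootSet ℚ_[2] \ ({0} ∪ P.rootSet ℚ_[2])) :
      x ≠ 0 ∧ P.eval x ≠ 0 := by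
    simpa [mem_rootSet, hP0] using hx.2
  obtain h | ⟨z, hz⟩ := (Q.rootSet ℚ_[2] \ ({0} ∪ P.rootSet ℚ_[2])).eq_empty_or_nonempty
  · rw [h, Set.encard_empty]
    exact zero_le
  obtain ⟨ha, hexp⟩ := coeff_ne_zero_and_exponents_ne_of_mem_rootSet hQ hz.1 (ne_zero_of_mem hz).1
    (ne_zero_of_mem hz).2
  refine (Set.encard_le_encard ?_).trans (encard_torusCosetPoints_le_twelve hc hd
    (Nat.cast_injective.ne hmn) hexp (-b / a))
  exact fun x hx => mem_torusCosetPoints_of_mem_rootSet ha hP hQ hx.1 (ne_zero_of_mem hx).1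
    (ne_zero_of_mem hx).2

theorem setOf_eval_eq_zero_subset_union_rootSet {K : Type*} [Field K] {e : K} {k₀ k₁ k₂ : ℕ}
    {f P Q : K[X]} (hf0 : f ≠ 0) (hf : f = C e * (X ^ k₀ * P ^ k₁ * Q ^ k₂)) :
    {x : K | f.eval x = 0} ⊆ {0} ∪ P.rootSet K ∪ Q.rootSet K := by
  subst hf
  intro x hx
  simp only [ne_eq, mul_eq_zero, not_or, C_eq_zero, pow_eq_zero_iff', not_and_or,
    not_not] at hf0
  simp only [Set.mem_ofPred_eq, eval_mul, eval_C, eval_pow, eval_X, mul_eq_zero, hf0.1, false_or,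
    pow_eq_zero_iff'] at hx
  simp only [Set.mem_union, Set.mem_singleton_iff, mem_rootSet, coe_aeval_eq_eval]
  tauto

theorem encard_union_le_encard_add_encard_sdiff {α : Type*} (s t : Set α) :
    (s ∪ t).encard ≤ s.encard + (t \ s).encard := by
  rw [← Set.union_sdiff_self]
  exact Set.encard_union_le _ _

end Counting

theorem twoadic_root_count_sigma_le_two_sharp
    (f : Polynomial ℚ_[2]) (hf : f ≠ 0) (hσ : addComplexity f ≤ 2) :
    {x : ℚ_[2] | f.eval x = 0}.ncard ≤ 15 := by
  obtain ⟨c, d, a, b, e, m, n, p, q, p', q', k₀, k₁, k₂, P, Q, hP, hQ, hfPQ⟩ :=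
    (addComplexity_le_iff.1 hσ).exists_eq_of_two
  refine ENat.toNat_le_of_le_natCast ?_
  calc {x : ℚ_[2] | f.eval x = 0}.encard
      ≤ ({0} ∪ P.rootSet ℚ_[2] ∪ Q.rootSet ℚ_[2]).encard :=
        Set.encard_le_encard (setOf_eval_eq_zero_subset_union_rootSet hf hfPQ)
    _ ≤ Set.encard {0} + (P.rootSet ℚ_[2] \ {0}).encard +
          (Q.rootSet ℚ_[2] \ ({0} ∪ P.rootSet ℚ_[2])).encard :=
        (encard_union_le_encard_add_encard_sdiff _ _).trans
          (add_le_add_left (encard_union_le_encard_add_encard_sdiff _ _) _)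
    _ ≤ 1 + 2 + 12 := add_le_add (add_le_add (Set.encard_singleton _).le
        (encard_rootSet_sdiff_zero_le_two hP)) (encard_rootSet_sdiff_rootSet_le_twelve hP hQ)
    _ = (15 : ℕ) := by norm_num
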